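/- arXiv:2205.12679 — 6 statements merged into one kernel-verified Lean document; each statement's English description precedes it below -/
import Mathlib

section
/- Under uniform label noise with rate η, the noisy robust risk is an affine function of the clean robust risk: for every parameter θ, L_η(θ) = ((K − 1 − K·η)/(K − 1)) · L_clean(θ) + η·C/(K − 1). -/
open MeasureTheory Finset

/-- Under uniform label noise with rate `η`, the noisy robust risk is an affine function of
the clean robust risk. -/
theorem uniform_noise_risk_affine
    {X : Type*} [MeasurableSpace X] {Θ : Type*} {P : Type*}
    (K : ℕ) (hK : 2 ≤ K)
    (f : Θ → X → P) (ℓ : P → Fin K → ℝ) (C : ℝ)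
    (hsym : ∀ p : P, ∑ j : Fin K, ℓ p j = C)
    (μ : Measure (X × Fin K)) [IsProbabilityMeasure μ]
    (hmeas : ∀ (θ : Θ) (j : Fin K), Measurable (fun z : X × Fin K => ℓ (f θ z.1) j))
    (hint : ∀ (θ : Θ) (j : Fin K), Integrable (fun z : X × Fin K => ℓ (f θ z.1) j) μ)
    (η : ℝ) (hη0 : 0 ≤ η) (hη1 : η < 1)
    (Lclean Lnoisy : Θ → ℝ)
    (hLclean : ∀ θ : Θ, Lclean θ = ∫ z : X × Fin K, ℓ (f θ z.1) z.2 ∂μ)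
    (hLnoisy : ∀ θ : Θ, Lnoisy θ =
      ∫ z : X × Fin K,
        ((1 - η) * ℓ (f θ z.1) z.2
          + (η / ((K : ℝ) - 1)) * ∑ j ∈ Finset.univ.filter (fun j => j ≠ z.2), ℓ (f θ z.1) j) ∂μ)
    (θ : Θ) :
    Lnoisy θ = (((K : ℝ) - 1 - (K : ℝ) * η) / ((K : ℝ) - 1)) * Lclean θ
      + η * C / ((K : ℝ) - 1) := by
  have hK1 : (K : ℝ) - 1 ≠ 0 := by
    have : (2 : ℝ) ≤ K := by exact_mod_cast hK
    intro h
    linarith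
  have hI : Integrable (fun z : X × Fin K => ℓ (f θ z.1) z.2) μ := by
    have h : (fun z : X × Fin K => ℓ (f θ z.1) z.2) = fun z => ∑ j : Fin K,
        (Prod.snd ⁻¹' {j} : Set (X × Fin K)).indicator (fun z => ℓ (f θ z.1) j) z := by
      funext z
      rw [Finset.sum_eq_single z.2]
      · simp
      · intro b _ hb
        simp [hb.symm]
      · simp
    rw [h]
    refine integrable_finsetSum _ fun j _ => (hint θ j).indicator ?_
    exact measurable_snd (measurableSet_singleton j)
  have hpt : ∀ z : X × Fin K, ((1 - η) * ℓ (f θ z.1) z.2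
      + (η / ((K : ℝ) - 1)) * ∑ j ∈ Finset.univ.filter (fun j => j ≠ z.2), ℓ (f θ z.1) j)
      = (((K : ℝ) - 1 - (K : ℝ) * η) / ((K : ℝ) - 1)) * ℓ (f θ z.1) z.2
        + η * C / ((K : ℝ) - 1) := by
    intro z
    have h1 : ∑ j ∈ Finset.univ.filter (fun j => j ≠ z.2), ℓ (f θ z.1) j
        = C - ℓ (f θ z.1) z.2 := by
      rw [← hsym (f θ z.1), Finset.filter_ne', eq_sub_iff_add_eq,
        Finset.sum_erase_add _ _ (Finset.mem_univ _)]
    rw [h1]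
    field_simp
    ring
  rw [hLnoisy, hLclean]
  simp_rw [hpt]
  rw [integral_add (hI.const_mul _) (integrable_const _), integral_const_mul]
  simp
end

section
/- A symmetric loss is noise-tolerant under uniform label noise: if the noise rate satisfies η < (K − 1)/K and θ* minimizes the clean risk L_clean over Θ, then θ* also minimizes the noisy risk L_η over Θ; moreover, for all θ, L_η(θ*) − L_η(θ) = ((K − 1 − K·η)/(K − 1)) · (L_clean(θ*) − L_clean(θ)) ≤ 0. -/
open MeasureTheory Finset

/-- A symmetric loss is noise-tolerant under uniform label noise: if `η < (K-1)/K` and `θ*`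
minimizes the clean risk, then `θ*` also minimizes the noisy risk, and the excess noisy risk
is an explicit nonpositive multiple of the excess clean risk. -/
theorem symmetric_loss_noise_tolerant_uniform
    {X : Type*} [MeasurableSpace X] {Θ : Type*} {P : Type*}
    (K : ℕ) (hK : 2 ≤ K)
    (f : Θ → X → P) (ℓ : P → Fin K → ℝ) (C : ℝ)
    (hsym : ∀ p : P, ∑ j : Fin K, ℓ p j = C)
    (μ : Measure (X × Fin K)) [IsProbabilityMeasure μ]
    (hmeas : ∀ (θ : Θ) (j : Fin K), Measurable (fun z : X × Fin K => ℓ (f θ z.1) j))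
    (hint : ∀ (θ : Θ) (j : Fin K), Integrable (fun z : X × Fin K => ℓ (f θ z.1) j) μ)
    (η : ℝ) (hη0 : 0 ≤ η) (hη1 : η < 1)
    (Lclean Lnoisy : Θ → ℝ)
    (hLclean : ∀ θ : Θ, Lclean θ = ∫ z : X × Fin K, ℓ (f θ z.1) z.2 ∂μ)
    (hLnoisy : ∀ θ : Θ, Lnoisy θ =
      ∫ z : X × Fin K,
        ((1 - η) * ℓ (f θ z.1) z.2
          + (η / ((K : ℝ) - 1)) * ∑ j ∈ Finset.univ.filter (fun j => j ≠ z.2), ℓ (f θ z.1) j) ∂μ)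
    (hη : η < ((K : ℝ) - 1) / (K : ℝ))
    (θstar : Θ) (hmin : ∀ θ : Θ, Lclean θstar ≤ Lclean θ) :
    (∀ θ : Θ, Lnoisy θstar ≤ Lnoisy θ) ∧
    (∀ θ : Θ,
      Lnoisy θstar - Lnoisy θ
          = (((K : ℝ) - 1 - (K : ℝ) * η) / ((K : ℝ) - 1)) * (Lclean θstar - Lclean θ) ∧
      Lnoisy θstar - Lnoisy θ ≤ 0) := by
  have hK2 : (2 : ℝ) ≤ (K : ℝ) := by exact_mod_cast hK
  have hK1 : (0 : ℝ) < (K : ℝ) - 1 := by linarith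
  have hK0 : (0 : ℝ) < (K : ℝ) := by linarith
  have hI : ∀ θ : Θ, Integrable (fun z : X × Fin K => ℓ (f θ z.1) z.2) μ := by
    intro θ
    have h : Integrable (fun z : X × Fin K => ∑ j : Fin K,
        (Prod.snd ⁻¹' {j} : Set (X × Fin K)).indicator (fun z => ℓ (f θ z.1) j) z) μ :=
      integrable_finsetSum _ fun j _ =>
        (hint θ j).indicator (measurable_snd (measurableSet_singleton j))
    refine h.congr (Filter.Eventually.of_forall fun z => ?_)
    show ∑ j : Fin K, (Prod.snd ⁻¹' {j} : Set (X × Fin K)).indicator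
      (fun z => ℓ (f θ z.1) j) z = ℓ (f θ z.1) z.2
    rw [Finset.sum_eq_single z.2]
    · exact Set.indicator_of_mem (by simp) _
    · intro j _ hj
      exact Set.indicator_of_notMem (fun hz => hj (Eq.symm hz)) _
    · intro hz
      exact absurd (Finset.mem_univ _) hz
  have key : ∀ θ : Θ, Lnoisy θ
      = (((K : ℝ) - 1 - (K : ℝ) * η) / ((K : ℝ) - 1)) * Lclean θ + η / ((K : ℝ) - 1) * C := by
    intro θ
    rw [hLnoisy, hLclean]
    have h : ∀ z : X × Fin K, ((1 - η) * ℓ (f θ z.1) z.2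
          + (η / ((K : ℝ) - 1)) * ∑ j ∈ Finset.univ.filter (fun j => j ≠ z.2), ℓ (f θ z.1) j)
        = (((K : ℝ) - 1 - (K : ℝ) * η) / ((K : ℝ) - 1)) * ℓ (f θ z.1) z.2
          + η / ((K : ℝ) - 1) * C := by
      intro z
      have h1 : ∑ j ∈ Finset.univ.filter (fun j => j ≠ z.2), ℓ (f θ z.1) j
          = C - ℓ (f θ z.1) z.2 := by
        rw [Finset.filter_ne', ← hsym (f θ z.1),
          ← Finset.add_sum_erase _ _ (Finset.mem_univ z.2)]
        ring
      rw [h1]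
      field_simp
      ring
    simp_rw [h]
    rw [integral_add ((hI θ).const_mul _) (integrable_const _), integral_const_mul]
    simp
  have hc : 0 ≤ ((K : ℝ) - 1 - (K : ℝ) * η) / ((K : ℝ) - 1) := by
    rw [lt_div_iff₀ hK0] at hη
    apply div_nonneg _ hK1.le
    linarith
  have hle : ∀ θ : Θ, Lnoisy θstar ≤ Lnoisy θ := by
    intro θ
    rw [key, key]
    have := mul_le_mul_of_nonneg_left (hmin θ) hc
    linarith
  refine ⟨hle, fun θ => ⟨?_, by linarith [hle θ]⟩⟩
  rw [key, key]
  ring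
end

section
/- Under class-dependent label noise given by a noise matrix (η_{ij}), the noisy risk of a symmetric loss decomposes as: for every parameter θ, L_cd(θ) = C · ∫ (1 − η_y) dμ(x, y) − ∫ ∑_{j ≠ y} (1 − η_y − η_{y j}) · ℓ(f θ x, j) dμ(x, y), where η_i = ∑_{j ≠ i} η_{ij}. -/
open MeasureTheory Finset

/-- Under class-dependent label noise given by a noise matrix `η i j`, the noisy risk of a
symmetric loss decomposes as
`L_cd(θ) = C·∫ (1 − η_y) dμ − ∫ ∑_{j ≠ y} (1 − η_y − η_{y j})·ℓ(f θ x, j) dμ`,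
where `η_i = ∑_{j ≠ i} η i j`. -/
theorem class_dependent_noise_risk_decomposition
    {X : Type*} [MeasurableSpace X] {Θ : Type*} {P : Type*}
    (K : ℕ) (hK : 2 ≤ K)
    (f : Θ → X → P) (ℓ : P → Fin K → ℝ) (C : ℝ)
    (hsym : ∀ p : P, ∑ j : Fin K, ℓ p j = C)
    (μ : Measure (X × Fin K)) [IsProbabilityMeasure μ]
    (hmeas : ∀ (θ : Θ) (j : Fin K), Measurable (fun z : X × Fin K => ℓ (f θ z.1) j))
    (hint : ∀ (θ : Θ) (j : Fin K), Integrable (fun z : X × Fin K => ℓ (f θ z.1) j) μ)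
    (η : Fin K → Fin K → ℝ)
    (hη01 : ∀ i j : Fin K, i ≠ j → 0 ≤ η i j ∧ η i j ≤ 1)
    (ηtot : Fin K → ℝ)
    (hηtot : ∀ i : Fin K, ηtot i = ∑ j ∈ Finset.univ.filter (fun j => j ≠ i), η i j)
    (hηtot1 : ∀ i : Fin K, ηtot i ≤ 1)
    (Lcd : Θ → ℝ)
    (hLcd : ∀ θ : Θ, Lcd θ =
      ∫ z : X × Fin K,
        ((1 - ηtot z.2) * ℓ (f θ z.1) z.2
          + ∑ j ∈ Finset.univ.filter (fun j => j ≠ z.2), η z.2 j * ℓ (f θ z.1) j) ∂μ)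
    (θ : Θ) :
    Lcd θ = C * (∫ z : X × Fin K, (1 - ηtot z.2) ∂μ)
      - ∫ z : X × Fin K,
          ∑ j ∈ Finset.univ.filter (fun j => j ≠ z.2),
            (1 - ηtot z.2 - η z.2 j) * ℓ (f θ z.1) j ∂μ := by
  have hb : ∀ g : Fin K → ℝ, ∃ B : ℝ, ∀ i, ‖g i‖ ≤ B := fun g =>
    ⟨∑ i, ‖g i‖, fun i => Finset.single_le_sum (f := fun i => ‖g i‖)
      (fun _ _ => norm_nonneg _) (Finset.mem_univ i)⟩
  have hm : ∀ g : Fin K → ℝ, AEStronglyMeasurable (fun z : X × Fin K => g z.2) μ := fun g =>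
    ((measurable_of_finite g).comp measurable_snd).aestronglyMeasurable
  have hg : ∀ g : Fin K → ℝ, Integrable (fun z : X × Fin K => g z.2) μ := by
    intro g
    obtain ⟨B, hB⟩ := hb g
    exact Integrable.of_bound (hm g) B (Filter.Eventually.of_forall fun z => hB z.2)
  have hgl : ∀ (g : Fin K → ℝ) (j : Fin K),
      Integrable (fun z : X × Fin K => g z.2 * ℓ (f θ z.1) j) μ := by
    intro g j
    obtain ⟨B, hB⟩ := hb g
    exact (hint θ j).bdd_mul (hm g) (Filter.Eventually.of_forall fun z => hB z.2)
  have hI2 : Integrable (fun z : X × Fin K =>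
      ∑ j ∈ Finset.univ.filter (fun j => j ≠ z.2),
            (1 - ηtot z.2 - η z.2 j) * ℓ (f θ z.1) j) μ := by
    have h := integrable_finsetSum (μ := μ) (Finset.univ : Finset (Fin K)) (fun j _ =>
      hgl (fun i => if j ≠ i then (1 - ηtot i - η i j) else 0) j)
    refine h.congr (Filter.Eventually.of_forall fun z => ?_)
    simp only [Finset.sum_filter, ite_mul, zero_mul]
  have hI1 : Integrable (fun z : X × Fin K => C * (1 - ηtot z.2)) μ :=
    (hg (fun i => 1 - ηtot i)).const_mul C
  rw [hLcd θ, ← integral_const_mul, ← integral_sub hI1 hI2]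
  refine integral_congr_ae (Filter.Eventually.of_forall fun z => ?_)
  have hs := hsym (f θ z.1)
  rw [← Finset.add_sum_erase _ _ (Finset.mem_univ z.2)] at hs
  simp only [Finset.filter_ne', sub_mul (1 - ηtot z.2), Finset.sum_sub_distrib, ← Finset.mul_sum]
  rw [← hs]
  ring
end

section
/- A symmetric loss is noise-tolerant under class-dependent label noise: assume in addition that 0 ≤ ℓ(p, j) ≤ C/(K − 1) for all p and j, that η_{ij} < 1 − η_i for all i and all j ≠ i, and that there exists θ* ∈ Θ with L_clean(θ*) = 0. Then any minimizer θ̂ of the noisy risk L_cd over Θ satisfies L_clean(θ̂) = 0; in particular θ̂ also minimizes the clean risk L_clean over Θ. -/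
open MeasureTheory Finset

lemma aux_int {X : Type*} [MeasurableSpace X] {K : ℕ} (μ : Measure (X × Fin K))
    (w : Fin K → ℝ) (g : X × Fin K → ℝ) (hg : Integrable g μ) :
    Integrable (fun z => w z.2 * g z) μ := by
  refine hg.bdd_mul (c := ∑ i, |w i|) ?_ ?_
  · exact ((measurable_of_finite w).comp measurable_snd).aestronglyMeasurable
  · refine Filter.Eventually.of_forall fun z => ?_
    exact Finset.single_le_sum (f := fun i => |w i|) (fun i _ => abs_nonneg _) (Finset.mem_univ z.2)

/-- A symmetric loss is noise-tolerant under class-dependent label noise: if the loss is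
bounded in `[0, C/(K-1)]`, the noise satisfies `η_{ij} < 1 − η_i` for all `j ≠ i`, and some
`θ*` achieves zero clean risk, then any minimizer `θ̂` of the noisy risk has zero clean risk
and hence also minimizes the clean risk. -/
theorem symmetric_loss_noise_tolerant_class_dependent
    {X : Type*} [MeasurableSpace X] {Θ : Type*} {P : Type*}
    (K : ℕ) (hK : 2 ≤ K)
    (f : Θ → X → P) (ℓ : P → Fin K → ℝ) (C : ℝ)
    (hsym : ∀ p : P, ∑ j : Fin K, ℓ p j = C)
    (hbound : ∀ (p : P) (j : Fin K), 0 ≤ ℓ p j ∧ ℓ p j ≤ C / ((K : ℝ) - 1))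
    (μ : Measure (X × Fin K)) [IsProbabilityMeasure μ]
    (hmeas : ∀ (θ : Θ) (j : Fin K), Measurable (fun z : X × Fin K => ℓ (f θ z.1) j))
    (hint : ∀ (θ : Θ) (j : Fin K), Integrable (fun z : X × Fin K => ℓ (f θ z.1) j) μ)
    (η : Fin K → Fin K → ℝ)
    (hη01 : ∀ i j : Fin K, i ≠ j → 0 ≤ η i j ∧ η i j ≤ 1)
    (ηtot : Fin K → ℝ)
    (hηtot : ∀ i : Fin K, ηtot i = ∑ j ∈ Finset.univ.filter (fun j => j ≠ i), η i j)
    (hηtot1 : ∀ i : Fin K, ηtot i ≤ 1)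
    (hnoise : ∀ i j : Fin K, j ≠ i → η i j < 1 - ηtot i)
    (Lclean Lcd : Θ → ℝ)
    (hLclean : ∀ θ : Θ, Lclean θ = ∫ z : X × Fin K, ℓ (f θ z.1) z.2 ∂μ)
    (hLcd : ∀ θ : Θ, Lcd θ =
      ∫ z : X × Fin K,
        ((1 - ηtot z.2) * ℓ (f θ z.1) z.2
          + ∑ j ∈ Finset.univ.filter (fun j => j ≠ z.2), η z.2 j * ℓ (f θ z.1) j) ∂μ)
    (θstar : Θ) (hstar : Lclean θstar = 0)
    (θhat : Θ) (hhat : ∀ θ : Θ, Lcd θhat ≤ Lcd θ) :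
    Lclean θhat = 0 ∧ ∀ θ : Θ, Lclean θhat ≤ Lclean θ := by
  classical
  set M : ℝ := C / ((K : ℝ) - 1) with hM
  have hK1 : (0 : ℝ) < (K : ℝ) - 1 := by
    have : (2 : ℝ) ≤ K := by exact_mod_cast hK
    linarith
  have hMC : ((K : ℝ) - 1) * M = C := by rw [hM]; field_simp
  have hcard : ∀ i : Fin K, ((Finset.univ.filter (fun j => j ≠ i)).card : ℝ) = (K : ℝ) - 1 := by
    intro i
    rw [Finset.filter_ne', Finset.card_erase_of_mem (Finset.mem_univ _), Finset.card_univ,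
      Fintype.card_fin, Nat.cast_sub (by omega)]
    simp
  have hsplit : ∀ (g : Fin K → ℝ) (i : Fin K),
      ∑ j ∈ Finset.univ.filter (fun j => j ≠ i), g j = (∑ j, g j) - g i := by
    intro g i
    rw [Finset.filter_ne', ← Finset.add_sum_erase _ g (Finset.mem_univ i)]
    ring
  have hsumM : ∀ (p : P) (i : Fin K),
      ∑ j ∈ Finset.univ.filter (fun j => j ≠ i), (M - ℓ p j) = ℓ p i := by
    intro p i
    rw [Finset.sum_sub_distrib, hsplit (ℓ p), hsym, Finset.sum_const, nsmul_eq_mul, hcard, hMC]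
    ring
  let D : P → Fin K → ℝ := fun p i =>
    ∑ j ∈ Finset.univ.filter (fun j => j ≠ i), (1 - ηtot i - η i j) * (M - ℓ p j)
  let B : Fin K → ℝ := fun i => ∑ j ∈ Finset.univ.filter (fun j => j ≠ i), η i j * M
  have hg : ∀ (p : P) (i : Fin K), (1 - ηtot i) * ℓ p i
      + ∑ j ∈ Finset.univ.filter (fun j => j ≠ i), η i j * ℓ p j = B i + D p i := by
    intro p i
    rw [← hsumM p i, Finset.mul_sum, ← Finset.sum_add_distrib, ← Finset.sum_add_distrib]
    exact Finset.sum_congr rfl fun j _ => by ring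
  have htot0 : ∀ i, 0 ≤ ηtot i := by
    intro i
    rw [hηtot]
    exact Finset.sum_nonneg fun j hj => (hη01 i j (Finset.mem_filter.1 hj).2.symm).1
  have hDle : ∀ p i, D p i ≤ ℓ p i := by
    intro p i
    rw [← hsumM p i]
    refine Finset.sum_le_sum fun j hj => ?_
    have h1 := (hη01 i j (Finset.mem_filter.1 hj).2.symm).1
    have h2 := (hbound p j).2
    have h3 := htot0 i
    nlinarith
  obtain ⟨c, hc0, hc⟩ : ∃ c : ℝ, 0 < c ∧ ∀ i j : Fin K, j ≠ i → c ≤ 1 - ηtot i - η i j := by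
    have h : ∀ᶠ c in nhdsWithin (0 : ℝ) (Set.Ioi 0),
        ∀ i j : Fin K, j ≠ i → c ≤ 1 - ηtot i - η i j := by
      rw [Filter.eventually_all]; intro i
      rw [Filter.eventually_all]; intro j
      by_cases hij : j = i
      · simp [hij]
      · have := hnoise i j hij
        filter_upwards [nhdsWithin_le_nhds (Iio_mem_nhds (show (0 : ℝ) < 1 - ηtot i - η i j by
          linarith))] with c hc _
        exact le_of_lt hc
    obtain ⟨c, h1, h2⟩ := (h.and self_mem_nhdsWithin).exists
    exact ⟨c, h2, h1⟩
  have hcD : ∀ p i, c * ℓ p i ≤ D p i := by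
    intro p i
    rw [← hsumM p i, Finset.mul_sum]
    refine Finset.sum_le_sum fun j hj => ?_
    exact mul_le_mul_of_nonneg_right (hc i j (Finset.mem_filter.1 hj).2)
      (sub_nonneg.2 (hbound p j).2)
  have hBint : Integrable (fun z : X × Fin K => B z.2) μ := by
    simpa using aux_int μ B (fun _ => 1) (integrable_const _)
  have hlint : ∀ θ, Integrable (fun z : X × Fin K => ℓ (f θ z.1) z.2) μ := by
    intro θ
    have : Integrable (fun z : X × Fin K =>
        ∑ j, (fun i => if i = j then (1 : ℝ) else 0) z.2 * ℓ (f θ z.1) j) μ :=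
      integrable_finsetSum _ fun j _ => aux_int μ (fun i => if i = j then (1 : ℝ) else 0) _ (hint θ j)
    simpa using this
  have hDint : ∀ θ, Integrable (fun z : X × Fin K => D (f θ z.1) z.2) μ := by
    intro θ
    have : Integrable (fun z : X × Fin K =>
        ∑ j, (fun i => if j ≠ i then (1 - ηtot i - η i j) else 0) z.2 * (M - ℓ (f θ z.1) j)) μ :=
      integrable_finsetSum _ fun j _ => aux_int μ (fun i => if j ≠ i then (1 - ηtot i - η i j) else 0) _ ((integrable_const M).sub (hint θ j))
    refine this.congr (Filter.Eventually.of_forall fun z => ?_)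
    simp only [D, Finset.sum_filter, ite_mul, zero_mul]
  have hLcd' : ∀ θ, Lcd θ = (∫ z, B z.2 ∂μ) + ∫ z, D (f θ z.1) z.2 ∂μ := by
    intro θ
    rw [hLcd, ← integral_add hBint (hDint θ)]
    simp only [hg]
  have hnn : ∀ θ, 0 ≤ Lclean θ := by
    intro θ
    rw [hLclean]
    exact integral_nonneg fun z => (hbound _ _).1
  have h1 : (∫ z, D (f θstar z.1) z.2 ∂μ) ≤ 0 := by
    rw [← hstar, hLclean]
    exact integral_mono (hDint _) (hlint _) fun z => hDle _ _
  have h2 : c * Lclean θhat ≤ ∫ z, D (f θhat z.1) z.2 ∂μ := by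
    rw [hLclean, ← integral_const_mul]
    exact integral_mono ((hlint _).const_mul c) (hDint _) fun z => hcD _ _
  have h3 := hhat θstar
  rw [hLcd', hLcd'] at h3
  have h4 : Lclean θhat = 0 := by
    have := hnn θhat
    nlinarith
  exact ⟨h4, fun θ => h4 ▸ hnn θ⟩
end

section
/- Under non-uniform (sample-dependent) label noise with measurable noise rate function η : X → [0, 1], the noisy risk of a symmetric loss decomposes as: for every parameter θ, L_nu(θ) = (C/(K − 1)) · ∫ η(x) dμ(x, y) + ∫ (1 − K·η(x)/(K − 1)) · ℓ(f θ x, y) dμ(x, y). -/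
open MeasureTheory Finset

/-- Under non-uniform (sample-dependent) label noise with rate function `η : X → [0,1]`, the
noisy risk of a symmetric loss decomposes as
`L_nu(θ) = (C/(K-1))·∫ η(x) dμ + ∫ (1 − K·η(x)/(K−1))·ℓ(f θ x, y) dμ`. -/
theorem nonuniform_noise_risk_decomposition
    {X : Type*} [MeasurableSpace X] {Θ : Type*} {P : Type*}
    (K : ℕ) (hK : 2 ≤ K)
    (f : Θ → X → P) (ℓ : P → Fin K → ℝ) (C : ℝ)
    (hsym : ∀ p : P, ∑ j : Fin K, ℓ p j = C)
    (μ : Measure (X × Fin K)) [IsProbabilityMeasure μ]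
    (hmeas : ∀ (θ : Θ) (j : Fin K), Measurable (fun z : X × Fin K => ℓ (f θ z.1) j))
    (hint : ∀ (θ : Θ) (j : Fin K), Integrable (fun z : X × Fin K => ℓ (f θ z.1) j) μ)
    (η : X → ℝ) (hηmeas : Measurable η) (hη01 : ∀ x : X, 0 ≤ η x ∧ η x ≤ 1)
    (Lnu : Θ → ℝ)
    (hLnu : ∀ θ : Θ, Lnu θ =
      ∫ z : X × Fin K,
        ((1 - η z.1) * ℓ (f θ z.1) z.2
          + (η z.1 / ((K : ℝ) - 1)) *
              ∑ j ∈ Finset.univ.filter (fun j => j ≠ z.2), ℓ (f θ z.1) j) ∂μ)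
    (θ : Θ) :
    Lnu θ = (C / ((K : ℝ) - 1)) * (∫ z : X × Fin K, η z.1 ∂μ)
      + ∫ z : X × Fin K, (1 - (K : ℝ) * η z.1 / ((K : ℝ) - 1)) * ℓ (f θ z.1) z.2 ∂μ := by
  have hK1 : (K : ℝ) - 1 ≠ 0 := by
    have : (2 : ℝ) ≤ K := by exact_mod_cast hK
    intro h
    linarith
  have hg : Integrable (fun z : X × Fin K => ℓ (f θ z.1) z.2) μ := by
    have h1 : (fun z : X × Fin K => ℓ (f θ z.1) z.2) = fun z => ∑ j : Fin K,
        ({z : X × Fin K | z.2 = j}).indicator (fun z => ℓ (f θ z.1) j) z := by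
      funext z
      simp [Set.indicator_apply]
    rw [h1]
    refine integrable_finsetSum _ fun j _ => (hint θ j).indicator ?_
    exact measurable_snd (measurableSet_singleton j)
  have hηm : Measurable (fun z : X × Fin K => η z.1) := hηmeas.comp measurable_fst
  have hb : ∀ᵐ z : X × Fin K ∂μ, ‖η z.1‖ ≤ 1 := by
    refine Filter.Eventually.of_forall fun z => ?_
    rw [Real.norm_eq_abs, abs_of_nonneg (hη01 z.1).1]
    exact (hη01 z.1).2
  have hηi : Integrable (fun z : X × Fin K => η z.1) μ :=
    Integrable.of_bound hηm.aestronglyMeasurable 1 hb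
  have hηg : Integrable (fun z : X × Fin K => η z.1 * ℓ (f θ z.1) z.2) μ :=
    hg.bdd_mul hηm.aestronglyMeasurable hb
  have hr : Integrable (fun z : X × Fin K =>
      (1 - (K : ℝ) * η z.1 / ((K : ℝ) - 1)) * ℓ (f θ z.1) z.2) μ := by
    refine (hg.sub (hηg.const_mul ((K : ℝ) / ((K : ℝ) - 1)))).congr
      (Filter.Eventually.of_forall fun z => ?_)
    simp only [Pi.sub_apply]
    ring
  rw [hLnu, ← integral_const_mul, ← integral_add (hηi.const_mul _) hr]
  refine integral_congr_ae (Filter.Eventually.of_forall fun z => ?_)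
  have hs : ∑ j ∈ Finset.univ.filter (fun j => j ≠ z.2), ℓ (f θ z.1) j
      = C - ℓ (f θ z.1) z.2 := by
    rw [← hsym (f θ z.1), Finset.filter_ne', ← Finset.add_sum_erase _ _ (Finset.mem_univ z.2)]
    ring
  simp only [hs]
  field_simp
  ring
end

section
/- A symmetric loss is noise-tolerant under non-uniform label noise: assume in addition that ℓ(p, j) ≥ 0 for all p and j, that η(x) < (K − 1)/K for all x ∈ X, and that θ* ∈ Θ satisfies L_clean(θ*) = 0. Then θ* minimizes the noisy risk L_nu over Θ, i.e. L_nu(θ*) ≤ L_nu(θ) for all θ ∈ Θ. -/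
open MeasureTheory Finset

/-- A symmetric loss is noise-tolerant under non-uniform label noise: if the loss is
nonnegative, `η(x) < (K-1)/K` for all `x`, and `θ*` achieves zero clean risk, then `θ*`
minimizes the noisy risk. -/
theorem symmetric_loss_noise_tolerant_nonuniform
    {X : Type*} [MeasurableSpace X] {Θ : Type*} {P : Type*}
    (K : ℕ) (hK : 2 ≤ K)
    (f : Θ → X → P) (ℓ : P → Fin K → ℝ) (C : ℝ)
    (hsym : ∀ p : P, ∑ j : Fin K, ℓ p j = C)
    (hpos : ∀ (p : P) (j : Fin K), 0 ≤ ℓ p j)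
    (μ : Measure (X × Fin K)) [IsProbabilityMeasure μ]
    (hmeas : ∀ (θ : Θ) (j : Fin K), Measurable (fun z : X × Fin K => ℓ (f θ z.1) j))
    (hint : ∀ (θ : Θ) (j : Fin K), Integrable (fun z : X × Fin K => ℓ (f θ z.1) j) μ)
    (η : X → ℝ) (hηmeas : Measurable η) (hη01 : ∀ x : X, 0 ≤ η x ∧ η x ≤ 1)
    (hη : ∀ x : X, η x < ((K : ℝ) - 1) / (K : ℝ))
    (Lclean Lnu : Θ → ℝ)
    (hLclean : ∀ θ : Θ, Lclean θ = ∫ z : X × Fin K, ℓ (f θ z.1) z.2 ∂μ)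
    (hLnu : ∀ θ : Θ, Lnu θ =
      ∫ z : X × Fin K,
        ((1 - η z.1) * ℓ (f θ z.1) z.2
          + (η z.1 / ((K : ℝ) - 1)) *
              ∑ j ∈ Finset.univ.filter (fun j => j ≠ z.2), ℓ (f θ z.1) j) ∂μ)
    (θstar : Θ) (hstar : Lclean θstar = 0) :
    ∀ θ : Θ, Lnu θstar ≤ Lnu θ := by
  have hK' : (1 : ℝ) ≤ (K : ℝ) - 1 := by
    have : (2 : ℝ) ≤ K := by exact_mod_cast hK
    linarith
  have hle : ∀ p j, ℓ p j ≤ C := fun p j => by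
    rw [← hsym p]
    exact Finset.single_le_sum (f := fun j => ℓ p j) (fun i _ => hpos p i) (Finset.mem_univ j)
  have hm : ∀ θ, Measurable (fun z : X × Fin K => ℓ (f θ z.1) z.2) := by
    intro θ
    have h : (fun z : X × Fin K => ℓ (f θ z.1) z.2)
        = fun z => ∑ j : Fin K, if z.2 = j then ℓ (f θ z.1) j else 0 := by
      funext z
      simp
    rw [h]
    refine Finset.measurable_sum _ fun j _ => ?_
    exact Measurable.ite (measurable_snd (measurableSet_singleton j)) (hmeas θ j) measurable_const
  have hη1 : Measurable (fun z : X × Fin K => η z.1) := hηmeas.comp measurable_fst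
  have hcle : ∀ x, 0 ≤ 1 - η x - η x / ((K : ℝ) - 1) := by
    intro x
    have h := hη x
    rw [lt_div_iff₀ (by linarith)] at h
    have h2 : 1 - η x - η x / ((K : ℝ) - 1) = (((K : ℝ) - 1) - η x * K) / ((K : ℝ) - 1) := by
      have : (K : ℝ) - 1 ≠ 0 := by linarith
      field_simp
      ring
    rw [h2]
    exact div_nonneg (by linarith) (by linarith)
  have hd0 : ∀ x, 0 ≤ η x / ((K : ℝ) - 1) := fun x => div_nonneg (hη01 x).1 (by linarith)
  have hform : ∀ θ, Lnu θ = ∫ z : X × Fin K,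
      ((1 - η z.1 - η z.1 / ((K : ℝ) - 1)) * ℓ (f θ z.1) z.2
        + η z.1 / ((K : ℝ) - 1) * C) ∂μ := by
    intro θ
    rw [hLnu]
    congr 1
    funext z
    have : ∑ j ∈ Finset.univ.filter (fun j => j ≠ z.2), ℓ (f θ z.1) j
        = C - ℓ (f θ z.1) z.2 := by
      rw [← hsym (f θ z.1), Finset.filter_ne', eq_sub_iff_add_eq]
      exact Finset.sum_erase_add _ _ (Finset.mem_univ _)
    rw [this]
    ring
  have hI : ∀ θ, Integrable (fun z : X × Fin K =>
      ((1 - η z.1 - η z.1 / ((K : ℝ) - 1)) * ℓ (f θ z.1) z.2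
        + η z.1 / ((K : ℝ) - 1) * C)) μ := by
    intro θ
    have hmm := hm θ
    refine Integrable.of_mem_Icc 0 (C + C) ((((measurable_const.sub hη1).sub (hη1.div_const _)).mul hmm).add
      ((hη1.div_const _).mul_const C)).aemeasurable (Filter.Eventually.of_forall fun z => ?_)
    have h1 := hpos (f θ z.1) z.2
    have h2 := hle (f θ z.1) z.2
    have h3 := hcle z.1
    have h4 := hd0 z.1
    have h5 := (hη01 z.1).1
    have hC : 0 ≤ C := h1.trans h2
    have h6 := mul_le_of_le_one_left h1 (by linarith : 1 - η z.1 - η z.1 / ((K : ℝ) - 1) ≤ 1)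
    have h7 := mul_le_of_le_one_left hC (by linarith : η z.1 / ((K : ℝ) - 1) ≤ 1)
    exact ⟨by positivity, by linarith⟩
  have hIl : Integrable (fun z : X × Fin K => ℓ (f θstar z.1) z.2) μ :=
    Integrable.of_mem_Icc 0 C (hm θstar).aemeasurable
      (Filter.Eventually.of_forall fun z => ⟨hpos _ _, hle _ _⟩)
  have hz : (fun z : X × Fin K => ℓ (f θstar z.1) z.2) =ᵐ[μ] 0 := by
    rw [← integral_eq_zero_iff_of_nonneg (fun z => hpos _ _) hIl, ← hLclean, hstar]
  intro θ
  rw [hform, hform]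
  refine integral_mono_ae (hI θstar) (hI θ) ?_
  filter_upwards [hz] with z hz
  have hz' : ℓ (f θstar z.1) z.2 = 0 := hz
  have := mul_nonneg (hcle z.1) (hpos (f θ z.1) z.2)
  simp only [hz']
  linarith
end
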